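/- For every δ > 0 there is a constant C_δ such that the following holds. Let N ≥ 1, let ξ_1 < ... < ξ_N be real numbers with ξ_j − ξ_{j−1} ≥ δ for all 2 ≤ j ≤ N, and let d_1, ..., d_N ∈ ℂ. Then ‖∑_{j=1}^N d_j e^{2πi ξ_j y}‖_{L²_y([0,1])} ≤ C_δ (∑_{j=1}^N |d_j|²)^{1/2}. -/

import Mathlib

open MeasureTheory Complex Set Real
open scoped ENNReal NNReal

/-!
The indicator of `[0,1]` is dominated by `e^π` times the Gaussian `e^{-π y²}`, so the squared norm
is at most `e^π ∫ |f(y)|² e^{-π y²} dy`, where `f` is the exponential sum. Since the Gaussian is its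
own Fourier transform, expanding the square turns this integral into
`∑ⱼ ∑ₖ dⱼ d̄ₖ e^{-π (ξⱼ - ξₖ)²}` (`integral_term`, `weighted_integral_le`).
Separation gives `|ξⱼ - ξₖ| ≥ δ |j - k|` (`sep_abs`), so all row sums of the kernel are bounded by
the theta series `∑_{m ∈ ℤ} e^{-π δ² m²}` (`row_sum_le`), and the Schur test
`2 |dⱼ| |dₖ| ≤ |dⱼ|² + |dₖ|²` finishes the proof (`schur_bound`).
-/

theorem sep_le {N : ℕ} {δ : ℝ} {ξ : Fin N → ℝ}
    (h : ∀ j : Fin N, ∀ h : (j : ℕ) + 1 < N, δ ≤ ξ ⟨(j : ℕ) + 1, h⟩ - ξ j) (n : ℕ) :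
    ∀ j k : Fin N, (k : ℕ) = j + n → δ * n ≤ ξ k - ξ j := by
  induction n with
  | zero =>
    intro j k hk
    have : k = j := Fin.ext (by simpa using hk)
    simp [this]
  | succ n ih =>
    intro j k hk
    have hk' := k.isLt
    have h1 := ih j ⟨j + n, by omega⟩ rfl
    have h2 := h ⟨j + n, by omega⟩ (by simp only; omega)
    have h3 : (⟨(j : ℕ) + n + 1, by omega⟩ : Fin N) = k := Fin.ext (by simp only; omega)
    simp only [h3] at h2
    push_cast
    linarith

theorem sep_abs {N : ℕ} {δ : ℝ} {ξ : Fin N → ℝ}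
    (h : ∀ j : Fin N, ∀ h : (j : ℕ) + 1 < N, δ ≤ ξ ⟨(j : ℕ) + 1, h⟩ - ξ j) (j k : Fin N) :
    δ * |((k : ℕ) : ℝ) - ((j : ℕ) : ℝ)| ≤ |ξ j - ξ k| := by
  rcases le_total (j : ℕ) (k : ℕ) with hjk | hjk
  · have h1 := sep_le h ((k : ℕ) - j) j k (by omega)
    rw [Nat.cast_sub hjk] at h1
    rw [abs_of_nonneg (sub_nonneg.2 (Nat.cast_le.2 hjk)), abs_sub_comm]
    exact h1.trans (le_abs_self _)
  · have h1 := sep_le h ((j : ℕ) - k) k j (by omega)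
    rw [Nat.cast_sub hjk] at h1
    rw [abs_sub_comm, abs_of_nonneg (sub_nonneg.2 (Nat.cast_le.2 hjk))]
    exact h1.trans (le_abs_self _)

theorem summable_theta {δ : ℝ} (hδ : 0 < δ) :
    Summable (fun m : ℤ => Real.exp (-(π * δ ^ 2) * (m : ℝ) ^ 2)) := by
  have ha : 0 < π * δ ^ 2 := by positivity
  have hn : Summable (fun n : ℕ => Real.exp (-(π * δ ^ 2) * (n : ℝ) ^ 2)) := by
    refine Summable.of_nonneg_of_le (fun _ => (Real.exp_pos _).le) (fun n => ?_)
      (Real.summable_exp_nat_mul_iff.2 (neg_lt_zero.2 ha))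
    rw [Real.exp_le_exp]
    have : (n : ℝ) ≤ (n : ℝ) ^ 2 := by exact_mod_cast Nat.le_self_pow two_ne_zero n
    nlinarith
  exact Summable.of_nat_of_neg (by simpa using hn) (by simpa using hn)

theorem row_sum_le {N : ℕ} {δ : ℝ} (hδ : 0 < δ) {ξ : Fin N → ℝ}
    (h : ∀ j : Fin N, ∀ h : (j : ℕ) + 1 < N, δ ≤ ξ ⟨(j : ℕ) + 1, h⟩ - ξ j) (j : Fin N) :
    ∑ k, Real.exp (-π * (ξ j - ξ k) ^ 2) ≤
      ∑' m : ℤ, Real.exp (-(π * δ ^ 2) * (m : ℝ) ^ 2) := by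
  let e : Fin N ↪ ℤ := ⟨fun k => ((k : ℕ) : ℤ) - ((j : ℕ) : ℤ), fun a b hab => by
    apply Fin.ext
    simp only at hab
    omega⟩
  calc ∑ k, Real.exp (-π * (ξ j - ξ k) ^ 2)
      ≤ ∑ k, Real.exp (-(π * δ ^ 2) * ((e k : ℤ) : ℝ) ^ 2) := by
        refine Finset.sum_le_sum fun k _ => ?_
        rw [Real.exp_le_exp]
        have h1 := pow_le_pow_left₀ (by positivity) (sep_abs h j k) 2
        rw [mul_pow, sq_abs, sq_abs] at h1
        have h2 : ((e k : ℤ) : ℝ) = ((k : ℕ) : ℝ) - ((j : ℕ) : ℝ) :=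
          Int.cast_sub _ _ |>.trans (by simp)
        rw [h2]
        nlinarith [Real.pi_pos]
    _ = ∑ m ∈ Finset.univ.map e, Real.exp (-(π * δ ^ 2) * (m : ℝ) ^ 2) := by
        rw [Finset.sum_map]
    _ ≤ _ := (summable_theta hδ).sum_le_tsum _ (fun _ _ => (Real.exp_pos _).le)

/-- Schur test for a symmetric nonnegative kernel with row sums at most `S`. -/
theorem schur_bound {N : ℕ} (K : Fin N → Fin N → ℝ) (hK : ∀ j k, 0 ≤ K j k)
    (hs : ∀ j k, K j k = K k j) {S : ℝ} (hS : ∀ j, ∑ k, K j k ≤ S) (a : Fin N → ℝ) :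
    ∑ j, ∑ k, a j * a k * K j k ≤ S * ∑ j, a j ^ 2 := by
  have h1 : ∑ j, ∑ k, a j ^ 2 * K j k ≤ S * ∑ j, a j ^ 2 := by
    rw [Finset.mul_sum]
    refine Finset.sum_le_sum fun j _ => ?_
    rw [← Finset.mul_sum, mul_comm S]
    exact mul_le_mul_of_nonneg_left (hS j) (sq_nonneg _)
  have h2 : ∑ j, ∑ k, a k ^ 2 * K j k = ∑ j, ∑ k, a j ^ 2 * K j k := by
    rw [Finset.sum_comm]
    exact Finset.sum_congr rfl fun j _ => Finset.sum_congr rfl fun k _ => by rw [hs]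
  have h3 : ∑ j, ∑ k, 2 * (a j * a k * K j k) ≤
      ∑ j, ∑ k, (a j ^ 2 * K j k + a k ^ 2 * K j k) :=
    Finset.sum_le_sum fun j _ => Finset.sum_le_sum fun k _ => by
      nlinarith [mul_nonneg (hK j k) (sq_nonneg (a j - a k))]
  simp only [Finset.sum_add_distrib, ← Finset.mul_sum] at h3 h2 h1
  linarith

/-- The Gaussian `e^{-π y²}` is its own Fourier transform; the integrability is recorded too,
as it is needed to integrate finite sums of such terms. -/
theorem integral_term (t : ℝ) :
    Integrable (fun y : ℝ => Complex.exp (2 * π * I * t * y) * Complex.exp (-π * y ^ 2)) ∧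
    ∫ y : ℝ, Complex.exp (2 * π * I * t * y) * Complex.exp (-π * y ^ 2) =
      (Real.exp (-π * t ^ 2) : ℂ) := by
  have hπ : (π : ℂ) ≠ 0 := by exact_mod_cast Real.pi_ne_zero
  have hre : 0 < (π : ℂ).re := by simpa using Real.pi_pos
  constructor
  · have := GaussianFourier.integrable_cexp_neg_mul_sq_add_real_mul_I hre 0
    have h0 : Integrable (fun y : ℝ => Complex.exp (-π * y ^ 2)) := by simpa using this
    refine h0.bdd_mul (c := 1) (by fun_prop) (Filter.Eventually.of_forall fun y => ?_)
    rw [show (2 * π * I * t * y : ℂ) = ((2 * π * t * y : ℝ) : ℂ) * I by push_cast; ring,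
      Complex.norm_exp_ofReal_mul_I]
  · have := fourierIntegral_gaussian hre (2 * π * t)
    rw [div_self hπ, Complex.one_cpow, one_mul] at this
    rw [show (Real.exp (-π * t ^ 2) : ℂ) = Complex.exp (-(2 * π * t) ^ 2 / (4 * π)) by
      push_cast
      congr 1
      field_simp
      ring, ← this]
    congr 1
    ext y
    congr 2
    ring

theorem expand_square {N : ℕ} (ξ : Fin N → ℝ) (d : Fin N → ℂ) (y : ℝ) :
    ((‖∑ j, d j * Complex.exp (2 * π * I * ξ j * y)‖ ^ 2 * Real.exp (-π * y ^ 2) : ℝ) : ℂ) =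
      ∑ j, ∑ k, (d j * (starRingEnd ℂ) (d k)) *
        (Complex.exp (2 * π * I * (ξ j - ξ k : ℝ) * y) * Complex.exp (-π * y ^ 2)) := by
  push_cast
  rw [← Complex.mul_conj', map_sum, Finset.sum_mul_sum, Finset.sum_mul]
  refine Finset.sum_congr rfl fun j _ => ?_
  rw [Finset.sum_mul]
  refine Finset.sum_congr rfl fun k _ => ?_
  have : (2 * π * I * (ξ j - ξ k) * y : ℂ) =
      2 * π * I * ξ j * y + (starRingEnd ℂ) (2 * π * I * ξ k * y) := by
    simp only [map_mul, Complex.conj_ofReal, Complex.conj_I, map_ofNat]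
    ring
  rw [this, Complex.exp_add, Complex.exp_conj, map_mul]
  ring

theorem weighted_integral_le {N : ℕ} (ξ : Fin N → ℝ) (d : Fin N → ℂ) :
    Integrable (fun y : ℝ =>
      ‖∑ j, d j * Complex.exp (2 * π * I * ξ j * y)‖ ^ 2 * Real.exp (-π * y ^ 2)) ∧
    ∫ y : ℝ, ‖∑ j, d j * Complex.exp (2 * π * I * ξ j * y)‖ ^ 2 * Real.exp (-π * y ^ 2) ≤
      ∑ j, ∑ k, ‖d j‖ * ‖d k‖ * Real.exp (-π * (ξ j - ξ k) ^ 2) := by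
  have hint : ∀ j k : Fin N, Integrable (fun y : ℝ => (d j * (starRingEnd ℂ) (d k)) *
        (Complex.exp (2 * π * I * (ξ j - ξ k : ℝ) * y) * Complex.exp (-π * y ^ 2))) :=
    fun j k => (integral_term (ξ j - ξ k)).1.const_mul _
  constructor
  · have h : Integrable (fun y : ℝ =>
      ((‖∑ j, d j * Complex.exp (2 * π * I * ξ j * y)‖ ^ 2 * Real.exp (-π * y ^ 2) : ℝ) : ℂ)) := by
      simp_rw [expand_square]
      exact integrable_finsetSum _ fun j _ => integrable_finsetSum _ fun k _ => hint j k
    exact h.re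
  · refine (le_abs_self _).trans ?_
    rw [← Real.norm_eq_abs, ← Complex.norm_real, ← integral_complex_ofReal]
    simp_rw [expand_square]
    rw [integral_finsetSum _ fun j _ => integrable_finsetSum _ fun k _ => hint j k]
    refine (norm_sum_le _ _).trans (Finset.sum_le_sum fun j _ => ?_)
    rw [integral_finsetSum _ fun k _ => hint j k]
    refine (norm_sum_le _ _).trans (Finset.sum_le_sum fun k _ => ?_)
    rw [integral_const_mul, (integral_term _).2, norm_mul, norm_mul, RCLike.norm_conj,
      Complex.norm_real, Real.norm_eq_abs, abs_of_pos (Real.exp_pos _)]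

/-- Almost-orthogonality of separated exponentials on `[0,1]`:
`‖∑_j d_j e^{2πi ξ_j y}‖_{L²([0,1])} ≤ C_δ (∑_j |d_j|²)^{1/2}`. -/
theorem exp_sum_L2_bound (δ : ℝ) (hδ : 0 < δ) :
    ∃ C : ℝ≥0, ∀ (N : ℕ), 1 ≤ N → ∀ ξ : Fin N → ℝ, StrictMono ξ →
      (∀ j : Fin N, ∀ h : (j : ℕ) + 1 < N, δ ≤ ξ ⟨(j : ℕ) + 1, h⟩ - ξ j) →
      ∀ d : Fin N → ℂ,
      eLpNorm (fun y : ℝ => ∑ j, d j *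
          Complex.exp (2 * (π : ℂ) * Complex.I * (ξ j : ℂ) * (y : ℂ))) 2
          (volume.restrict (Set.Icc (0:ℝ) 1))
        ≤ C * (∑ j, (‖d j‖₊ : ℝ≥0∞) ^ (2:ℝ)) ^ (1/2 : ℝ) := by
  set S : ℝ := ∑' m : ℤ, Real.exp (-(π * δ ^ 2) * (m : ℝ) ^ 2) with hSdef
  have hS : 0 ≤ S := tsum_nonneg fun _ => (Real.exp_pos _).le
  refine ⟨(Real.exp π * S).toNNReal ^ (1 / 2 : ℝ), fun N _ ξ _ hsep d => ?_⟩
  obtain ⟨hint, hle⟩ := weighted_integral_le ξ d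
  have hbound := hle.trans (schur_bound (fun j k => Real.exp (-π * (ξ j - ξ k) ^ 2))
    (fun _ _ => (Real.exp_pos _).le) (fun j k => by rw [← neg_sub, neg_sq])
    (row_sum_le hδ hsep) fun j => ‖d j‖)
  rw [eLpNorm_eq_lintegral_rpow_enorm_toReal two_ne_zero ENNReal.ofNat_ne_top,
    ENNReal.coe_rpow_of_nonneg _ (by norm_num), ← ENNReal.mul_rpow_of_nonneg _ _ (by norm_num)]
  simp only [ENNReal.toReal_ofNat]
  refine ENNReal.rpow_le_rpow ?_ (by norm_num)
  have hsum : ∑ j, (‖d j‖₊ : ℝ≥0∞) ^ (2:ℝ) = ENNReal.ofReal (∑ j, ‖d j‖ ^ 2) := by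
    rw [ENNReal.ofReal_sum_of_nonneg fun _ _ => sq_nonneg _]
    refine Finset.sum_congr rfl fun j _ => ?_
    rw [ENNReal.ofReal_pow (norm_nonneg _), ofReal_norm, ENNReal.rpow_ofNat]
    rfl
  rw [hsum, ← ENNReal.ofReal, ← ENNReal.ofReal_mul (by positivity)]
  calc ∫⁻ y in Icc (0:ℝ) 1, ‖∑ j, d j * Complex.exp (2 * π * I * ξ j * y)‖ₑ ^ (2:ℝ)
      ≤ ∫⁻ y in Icc (0:ℝ) 1, ENNReal.ofReal (Real.exp π *
          (‖∑ j, d j * Complex.exp (2 * π * I * ξ j * y)‖ ^ 2 * Real.exp (-π * y ^ 2))) := by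
        refine setLIntegral_mono' measurableSet_Icc fun y hy => ?_
        rw [ENNReal.rpow_ofNat, ← ofReal_norm, ← ENNReal.ofReal_pow (norm_nonneg _)]
        refine ENNReal.ofReal_le_ofReal ?_
        rw [mul_left_comm, ← Real.exp_add]
        -- `y² ≤ 1` on `[0,1]`, so the factor `e^{π - π y²}` is at least `1`
        refine le_mul_of_one_le_right (sq_nonneg _) (Real.one_le_exp ?_)
        nlinarith [Real.pi_pos, hy.1, hy.2, pow_le_one₀ hy.1 hy.2 (n := 2)]
    _ ≤ ∫⁻ y : ℝ, ENNReal.ofReal (Real.exp π *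
          (‖∑ j, d j * Complex.exp (2 * π * I * ξ j * y)‖ ^ 2 * Real.exp (-π * y ^ 2))) :=
        setLIntegral_le_lintegral _ _
    _ = ENNReal.ofReal (∫ y : ℝ, Real.exp π *
          (‖∑ j, d j * Complex.exp (2 * π * I * ξ j * y)‖ ^ 2 * Real.exp (-π * y ^ 2))) :=
        (ofReal_integral_eq_lintegral_ofReal (hint.const_mul _)
          (Filter.Eventually.of_forall fun y => by positivity)).symm
    _ ≤ _ := by
        refine ENNReal.ofReal_le_ofReal ?_
        rw [integral_const_mul, mul_assoc (Real.exp π)]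
        exact mul_le_mul_of_nonneg_left hbound (Real.exp_pos _).le
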